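/- Consider n samples with feature vectors w^1, …, w^n ∈ ℝ^d and bid prices 0 ≤ b2_i ≤ b1_i, let X = [L, U]^d with L < U, and define R(β) = (1/n) ∑_{i=1}^n r(w^i · β; b1_i, b2_i), l_i = min_{β ∈ X} w^i · β, u_i = max_{β ∈ X} w^i · β. Then for every β ∈ X there exist v, y and, for each i, z^i ∈ [0, 1]³ satisfying the LP relaxation constraints (v_i = w^i · β; y_i ≤ b2_i·z^i_1 + b1_i·z^i_2; y_i ≥ b2_i·(z^i_1 + z^i_2); y_i ≤ v_i + (b2_i − l_i)·z^i_1 − b1_i·z^i_3; y_i ≥ v_i − u_i·z^i_3; l_i ≤ v_i ≤ u_i; z^i_1 + z^i_2 + z^i_3 = 1) with objective (1/n) ∑ y_i ≥ R(β); consequently, the optimal value of the LP relaxation is an upper bound on max_{β ∈ X} R(β). Moreover, for any feasible point (β, v, y, z) of the LP relaxation, β is feasible for the original problem (β ∈ X). -/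

import Mathlib

open Finset

/-- The reward function `r(v; b1, b2)`. -/
noncomputable def reward (b1 b2 v : ℝ) : ℝ :=
  if v ≤ b2 then b2 else if v ≤ b1 then v else 0

/-- The feasible box `X = [L, U]^d`. -/
def box (d : ℕ) (L U : ℝ) : Set (Fin d → ℝ) := Set.Icc (fun _ => L) (fun _ => U)

/-- The average revenue `R(β) = (1/n) ∑ᵢ r(wⁱ · β; b1ᵢ, b2ᵢ)`. -/
noncomputable def avgReward (d n : ℕ) (w : Fin n → Fin d → ℝ) (b1 b2 : Fin n → ℝ)
    (β : Fin d → ℝ) : ℝ :=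
  (1 / n : ℝ) * ∑ i, reward (b1 i) (b2 i) (∑ j, w i j * β j)

/-- The linear constraints of the MIP formulation for a single sample. -/
def MipCon (b1 b2 l u v y : ℝ) (z : Fin 3 → ℝ) : Prop :=
  y ≤ b2 * z 0 + b1 * z 1 ∧ b2 * (z 0 + z 1) ≤ y ∧
  y ≤ v + (b2 - l) * z 0 - b1 * z 2 ∧ v - u * z 2 ≤ y ∧
  l ≤ v ∧ v ≤ u ∧ z 0 + z 1 + z 2 = 1

/-- Feasibility for the LP relaxation: `β ∈ X`, `vᵢ = wⁱ · β`, and for each sample `i` the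
variables `zⁱ ∈ [0,1]³` satisfy the linear constraints. -/
def LpFeasible (d n : ℕ) (w : Fin n → Fin d → ℝ) (b1 b2 l u : Fin n → ℝ) (L U : ℝ)
    (β : Fin d → ℝ) (v y : Fin n → ℝ) (z : Fin n → Fin 3 → ℝ) : Prop :=
  β ∈ box d L U ∧ ∀ i, v i = (∑ j, w i j * β j) ∧
    (∀ j, z i j ∈ Set.Icc (0 : ℝ) 1) ∧
    MipCon (b1 i) (b2 i) (l i) (u i) (v i) (y i) (z i)

/-- For every value `v ∈ [l, u]`, the reward is attained by a point satisfying the constraints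
of a single sample. -/
theorem exists_mipCon_reward {b1 b2 l u v : ℝ} (hl : l ≤ v) (hu : v ≤ u) :
    ∃ z : Fin 3 → ℝ, (∀ j, z j ∈ Set.Icc (0 : ℝ) 1) ∧
      MipCon b1 b2 l u v (reward b1 b2 v) z := by
  unfold MipCon reward
  split_ifs with h2 h1
  · refine ⟨![1, 0, 0], fun j => by fin_cases j <;> simp, ?_⟩
    simp
    grind
  · refine ⟨![0, 1, 0], fun j => by fin_cases j <;> simp, ?_⟩
    simp
    grind
  · refine ⟨![0, 0, 1], fun j => by fin_cases j <;> simp, ?_⟩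
    simp
    grind

/-- The LP relaxation upper-bounds the original problem: every `β ∈ X` can be completed to an
LP-feasible point whose objective is at least `R(β)`; and the `β`-part of any LP-feasible
point is feasible for the original problem. -/
theorem lp_relaxation_valid (d n : ℕ) (hn : 0 < n)
    (w : Fin n → Fin d → ℝ) (b1 b2 : Fin n → ℝ)
    (hb2 : ∀ i, 0 ≤ b2 i) (hb : ∀ i, b2 i ≤ b1 i)
    (L U : ℝ) (hLU : L < U) (l u : Fin n → ℝ)
    (hl : ∀ i, IsLeast ((fun β => ∑ j, w i j * β j) '' box d L U) (l i))
    (hu : ∀ i, IsGreatest ((fun β => ∑ j, w i j * β j) '' box d L U) (u i)) :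
    (∀ β ∈ box d L U, ∃ (v y : Fin n → ℝ) (z : Fin n → Fin 3 → ℝ),
      LpFeasible d n w b1 b2 l u L U β v y z ∧
      avgReward d n w b1 b2 β ≤ (1 / n : ℝ) * ∑ i, y i) ∧
    (∀ β v y z, LpFeasible d n w b1 b2 l u L U β v y z → β ∈ box d L U) := by
  refine ⟨fun β hβ => ?_, fun β v y z h => h.1⟩
  choose z hz hcon using fun i => exists_mipCon_reward (b1 := b1 i) (b2 := b2 i)
    ((hl i).2 (Set.mem_image_of_mem _ hβ)) ((hu i).2 (Set.mem_image_of_mem _ hβ))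
  exact ⟨fun i => ∑ j, w i j * β j, _, z, ⟨hβ, fun i => ⟨rfl, hz i, hcon i⟩⟩, le_rfl⟩
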